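/- Define γ(ε) = (1 + 2ε(2+ε) + 2(1+ε)·√(ε(2+ε)))². For every δ ∈ (0,2) there exists a constant c > 0 depending only on δ such that the following holds for all integers r ≥ 2 and all ε > 0 with ε ≥ r^{−δ}: if L is a finite set of affine functions such that every g ∈ L satisfies g(i) ≥ √i for all integers i ∈ {0,1,…,r}, and for every integer i ∈ {1,…,r} some g ∈ L satisfies g(i) ≤ (1+ε)·√i, then |L| ≥ c·(log r)/(log γ(ε)). (As ε → 0 this lower bound behaves as Ω(ε^{−1/2}·log r).) -/

import Mathlib

/-- The function `γ(ε) = (1 + 2ε(2+ε) + 2(1+ε)√(ε(2+ε)))²` from Magnanti–Stratila. -/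
noncomputable def gamEps (ε : ℝ) : ℝ :=
  (1 + 2 * ε * (2 + ε) + 2 * (1 + ε) * Real.sqrt (ε * (2 + ε))) ^ 2

/-!
In the coordinates `x = √a`, `s = √t`, `y = √b`, an affine function that is at least `√` at `t` and
at most `(1 + ε)√` at `a < t < b` forces
`(s - (1 + ε) x) (y - (1 + ε) s) ≤ ε (2 + ε) x s`.
Hence `s / x` and `y / s` cannot both exceed `κ = 1 + ε + √(ε (2 + ε))`, and taking `t = √(a b)`
gives `b / a ≤ κ ^ 4 = γ(ε)`.

On the integers, `t` and `b` have to be rounded up. Once `a` is of order `ε ^ (-1/2)`, rounding at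
most squares the ratio, so the function that serves `a` serves nothing from some
`b ≤ γ(ε) ^ 2 a` onwards. Discarding it and continuing from `b` shows that a cover of `{a, …, r}`
has more than `log (r / a) / (2 log γ(ε))` members.
-/

/-- The constant `κ = 1 + ε + √(ε(2+ε))`, the fourth root of `γ(ε)`: an affine function above `√` at
`t` cannot `(1+ε)`-approximate `√` at points on both sides of `t` that differ from it by a factor
exceeding `κ²`. -/
noncomputable def coverRatio (ε : ℝ) : ℝ :=
  1 + ε + √(ε * (2 + ε))

/-- The `(1+ε)`-approximating covers of the square root on the integers of `[a, r]`. The pair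
`g : ℝ × ℝ` encodes the affine function `x ↦ g.1 * x + g.2`. The left endpoint is a parameter so
that the part of a cover serving the integers beyond a given one is again a cover. -/
structure IsSqrtCover (ε : ℝ) (L : Finset (ℝ × ℝ)) (a r : ℕ) : Prop where
  sqrt_le : ∀ g ∈ L, ∀ i ∈ Set.Icc a r, √(i : ℝ) ≤ g.1 * i + g.2
  exists_le : ∀ i ∈ Set.Icc a r, ∃ g ∈ L, g.1 * (i : ℝ) + g.2 ≤ (1 + ε) * √(i : ℝ)

section CoverRatio

variable {ε : ℝ}

theorem gamEps_eq_coverRatio_pow (hε : 0 ≤ ε) : gamEps ε = coverRatio ε ^ 4 := by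
  have hsq : √(ε * (2 + ε)) ^ 2 = ε * (2 + ε) := Real.sq_sqrt (by positivity)
  have hκ : coverRatio ε ^ 2 = 1 + 2 * ε * (2 + ε) + 2 * (1 + ε) * √(ε * (2 + ε)) := by
    rw [coverRatio]
    linear_combination hsq
  rw [gamEps, ← hκ]
  ring

theorem one_add_sqrt_le_coverRatio (hε : 0 ≤ ε) : 1 + √ε ≤ coverRatio ε := by
  have : √ε ≤ √(ε * (2 + ε)) := Real.sqrt_le_sqrt (by nlinarith)
  rw [coverRatio]
  linarith

theorem one_le_coverRatio (hε : 0 ≤ ε) : 1 ≤ coverRatio ε :=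
  (le_add_of_nonneg_right (Real.sqrt_nonneg ε)).trans (one_add_sqrt_le_coverRatio hε)

theorem two_mul_sqrt_le_coverRatio_sq_sub_one (hε : 0 ≤ ε) : 2 * √ε ≤ coverRatio ε ^ 2 - 1 := by
  nlinarith [one_add_sqrt_le_coverRatio hε, Real.sqrt_nonneg ε]

theorem one_le_gamEps (hε : 0 ≤ ε) : 1 ≤ gamEps ε :=
  gamEps_eq_coverRatio_pow hε ▸ one_le_pow₀ (one_le_coverRatio hε)

theorem one_lt_gamEps (hε : 0 < ε) : 1 < gamEps ε := by
  have hκ : 1 < coverRatio ε :=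
    (lt_add_of_pos_right 1 (Real.sqrt_pos.2 hε)).trans_le (one_add_sqrt_le_coverRatio hε.le)
  exact gamEps_eq_coverRatio_pow hε.le ▸ one_lt_pow₀ hκ four_ne_zero

end CoverRatio

section AffineApproximation

variable {ε m d : ℝ}

theorem sub_mul_sub_le_of_affine_approx {x s y : ℝ} (hx : 0 ≤ x) (hxs : x < s) (hsy : s < y)
    (hmx : m * x ^ 2 + d ≤ (1 + ε) * x) (hmy : m * y ^ 2 + d ≤ (1 + ε) * y)
    (hms : s ≤ m * s ^ 2 + d) :
    (s - (1 + ε) * x) * (y - (1 + ε) * s) ≤ ε * (2 + ε) * (x * s) := by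
  -- Interpolate the line at `s ^ 2` between its values at `x ^ 2` and `y ^ 2`.
  have interpolation :
      (y - x) * (s * (x + y)) ≤ (y - x) * ((1 + ε) * (s ^ 2 + x * y)) :=
    calc (y - x) * (s * (x + y))
        = (y ^ 2 - x ^ 2) * s := by ring
      _ ≤ (y ^ 2 - x ^ 2) * (m * s ^ 2 + d) := by
        gcongr
        nlinarith
      _ = (y ^ 2 - s ^ 2) * (m * x ^ 2 + d) + (s ^ 2 - x ^ 2) * (m * y ^ 2 + d) := by ring
      _ ≤ (y ^ 2 - s ^ 2) * ((1 + ε) * x) + (s ^ 2 - x ^ 2) * ((1 + ε) * y) := by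
        gcongr <;> nlinarith
      _ = (y - x) * ((1 + ε) * (s ^ 2 + x * y)) := by ring
  linarith [le_of_mul_le_mul_left interpolation (by linarith)]

theorem le_coverRatio_mul_of_affine_approx {x s y : ℝ} (hε : 0 ≤ ε) (hx : 0 < x)
    (hxs : coverRatio ε * x < s) (hmx : m * x ^ 2 + d ≤ (1 + ε) * x)
    (hmy : m * y ^ 2 + d ≤ (1 + ε) * y) (hms : s ≤ m * s ^ 2 + d) :
    y ≤ coverRatio ε * s := by
  by_contra! hsy
  have hκ := one_le_coverRatio hε
  have hxs' : x < s := (le_mul_of_one_le_left hx.le hκ).trans_lt hxs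
  have hs : 0 < s := hx.trans hxs'
  have hsy' : s < y := (le_mul_of_one_le_left hs.le hκ).trans_lt hsy
  have hsx : √(ε * (2 + ε)) * x < s - (1 + ε) * x := by
    rw [coverRatio] at hxs
    linarith
  have hys : √(ε * (2 + ε)) * s < y - (1 + ε) * s := by
    rw [coverRatio] at hsy
    linarith
  have hlt : ε * (2 + ε) * (x * s) < (s - (1 + ε) * x) * (y - (1 + ε) * s) :=
    calc ε * (2 + ε) * (x * s)
        = √(ε * (2 + ε)) * x * (√(ε * (2 + ε)) * s) := by
          rw [mul_mul_mul_comm √_, Real.mul_self_sqrt (by positivity)]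
      _ < (s - (1 + ε) * x) * (y - (1 + ε) * s) :=
          mul_lt_mul'' hsx hys (by positivity) (by positivity)
  exact hlt.not_ge (sub_mul_sub_le_of_affine_approx hx.le hxs' hsy' hmx hmy hms)

theorem le_coverRatio_sq_mul_of_affine_approx {a t b : ℝ} (hε : 0 ≤ ε) (ha : 0 < a) (hb : 0 ≤ b)
    (hat : coverRatio ε ^ 2 * a < t) (hma : m * a + d ≤ (1 + ε) * √a)
    (hmb : m * b + d ≤ (1 + ε) * √b) (hmt : √t ≤ m * t + d) :
    b ≤ coverRatio ε ^ 2 * t := by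
  have hκ : 0 ≤ coverRatio ε := zero_le_one.trans (one_le_coverRatio hε)
  have ht : 0 ≤ t := le_trans (by positivity) hat.le
  have hxs : coverRatio ε * √a < √t := by
    apply Real.lt_sqrt_of_sq_lt
    rwa [mul_pow, Real.sq_sqrt ha.le]
  have hsy : √b ≤ coverRatio ε * √t :=
    le_coverRatio_mul_of_affine_approx (m := m) (d := d) hε (Real.sqrt_pos.2 ha) hxs
      (by rwa [Real.sq_sqrt ha.le]) (by rwa [Real.sq_sqrt hb]) (by rwa [Real.sq_sqrt ht])
  rwa [Real.sqrt_le_left (by positivity), mul_pow, Real.sq_sqrt ht] at hsy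

end AffineApproximation

theorem exists_nat_mul_lt_le_sq_mul {ρ a : ℝ} (ha : 0 ≤ a) (hρa : 1 ≤ (ρ - 1) * a) :
    ∃ t : ℕ, ρ * a < t ∧ (t : ℝ) ≤ ρ ^ 2 * a := by
  have hρ : 0 < ρ - 1 := pos_of_mul_pos_left (zero_lt_one.trans_le hρa) ha
  refine ⟨⌊ρ * a⌋₊ + 1, mod_cast Nat.lt_floor_add_one _, ?_⟩
  have hfloor : (⌊ρ * a⌋₊ : ℝ) ≤ ρ * a := Nat.floor_le (mul_nonneg (by linarith) ha)
  push_cast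
  nlinarith

namespace IsSqrtCover

variable {ε : ℝ} {L : Finset (ℝ × ℝ)} {a b r : ℕ}

theorem mono_left (hL : IsSqrtCover ε L a r) (hab : a ≤ b) : IsSqrtCover ε L b r where
  sqrt_le g hg i hi := hL.sqrt_le g hg i (Set.Icc_subset_Icc_left hab hi)
  exists_le i hi := hL.exists_le i (Set.Icc_subset_Icc_left hab hi)

theorem erase {g : ℝ × ℝ} (hL : IsSqrtCover ε L a r)
    (hg : ∀ i ∈ Set.Icc a r, (1 + ε) * √(i : ℝ) < g.1 * i + g.2) :
    IsSqrtCover ε (L.erase g) a r where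
  sqrt_le h hh := hL.sqrt_le h (Finset.mem_of_mem_erase hh)
  exists_le i hi := by
    obtain ⟨h, hhL, hhi⟩ := hL.exists_le i hi
    refine ⟨h, Finset.mem_erase.2 ⟨?_, hhL⟩, hhi⟩
    rintro rfl
    exact hhi.not_gt (hg i hi)

theorem exists_erase (hL : IsSqrtCover ε L a r) (hε : 0 ≤ ε) (har : a ≤ r)
    (ha : 1 ≤ (coverRatio ε ^ 2 - 1) * a) :
    ∃ g ∈ L, ∃ b : ℕ, a ≤ b ∧ (b : ℝ) ≤ gamEps ε ^ 2 * a ∧ IsSqrtCover ε (L.erase g) b r := by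
  set ρ := coverRatio ε ^ 2 with hρdef
  have hρ : 1 ≤ ρ := one_le_pow₀ (one_le_coverRatio hε)
  have ha0 : (0 : ℝ) < a := pos_of_mul_pos_right (zero_lt_one.trans_le ha) (by linarith)
  obtain ⟨g, hgL, hga⟩ := hL.exists_le a ⟨le_rfl, har⟩
  obtain ⟨t, hat, hta⟩ := exists_nat_mul_lt_le_sq_mul ha0.le ha
  have hat' : a ≤ t := mod_cast (le_mul_of_one_le_left ha0.le hρ).trans hat.le
  have ht : 1 ≤ (ρ - 1) * t :=
    ha.trans (mul_le_mul_of_nonneg_left (mod_cast hat') (by linarith))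
  obtain ⟨b, htb, hbt⟩ := exists_nat_mul_lt_le_sq_mul t.cast_nonneg ht
  have htb' : t ≤ b := mod_cast (le_mul_of_one_le_left t.cast_nonneg hρ).trans htb.le
  refine ⟨g, hgL, b, hat'.trans htb', ?_, (hL.mono_left (hat'.trans htb')).erase ?_⟩
  · calc (b : ℝ) ≤ ρ ^ 2 * t := hbt
      _ ≤ ρ ^ 2 * (ρ ^ 2 * a) := by gcongr
      _ = gamEps ε ^ 2 * a := by
        rw [gamEps_eq_coverRatio_pow hε, hρdef]
        ring
  · rintro i ⟨hbi, hir⟩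
    by_contra! hgi
    have hgt := hL.sqrt_le g hgL t ⟨hat', htb'.trans (hbi.trans hir)⟩
    have hit : (i : ℝ) ≤ ρ * t :=
      le_coverRatio_sq_mul_of_affine_approx hε ha0 i.cast_nonneg hat hga hgi hgt
    exact htb.not_ge ((Nat.cast_le.2 hbi).trans hit)

theorem lt_gamEps_pow_mul (hL : IsSqrtCover ε L a r) (hε : 0 ≤ ε)
    (ha : 1 ≤ (coverRatio ε ^ 2 - 1) * a) : (r : ℝ) < gamEps ε ^ (2 * L.card) * a := by
  have hγ := one_le_gamEps hε
  induction L using Finset.strongInduction generalizing a with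
  | H L ih =>
    rcases lt_or_ge r a with hra | har
    · calc (r : ℝ) < a := mod_cast hra
        _ ≤ gamEps ε ^ (2 * L.card) * a :=
          le_mul_of_one_le_left a.cast_nonneg (one_le_pow₀ hγ)
    · obtain ⟨g, hgL, b, hab, hba, hLg⟩ := hL.exists_erase hε har ha
      have hb : 1 ≤ (coverRatio ε ^ 2 - 1) * b :=
        ha.trans (mul_le_mul_of_nonneg_left (mod_cast hab)
          (sub_nonneg.2 (one_le_pow₀ (one_le_coverRatio hε))))
      calc (r : ℝ) < gamEps ε ^ (2 * (L.erase g).card) * b :=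
            ih _ (Finset.erase_ssubset hgL) hLg hb
        _ ≤ gamEps ε ^ (2 * (L.erase g).card) * (gamEps ε ^ 2 * a) := by gcongr
        _ = gamEps ε ^ (2 * L.card) * a := by
          rw [← Finset.card_erase_add_one hgL]
          ring

theorem lt_gamEps_pow_mul_of_one_le_sqrt_mul {R : ℝ} (hL : IsSqrtCover ε L 1 r) (hR : 1 ≤ R)
    (hεR : 1 ≤ √ε * R) : (r : ℝ) < gamEps ε ^ (2 * L.card) * R := by
  have hε : 0 ≤ ε :=
    (Real.sqrt_pos.1 (pos_of_mul_pos_left (zero_lt_one.trans_le hεR) (by linarith))).le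
  have hN : 1 ≤ ⌈R / 2⌉₊ := Nat.one_le_ceil_iff.2 (by positivity)
  have hNR : (⌈R / 2⌉₊ : ℝ) ≤ R := by
    linarith [Nat.ceil_le_two_mul (a := R / 2) (by linarith)]
  have hκN : 1 ≤ (coverRatio ε ^ 2 - 1) * ⌈R / 2⌉₊ :=
    calc 1 ≤ 2 * √ε * (R / 2) := by linarith
      _ ≤ (coverRatio ε ^ 2 - 1) * ⌈R / 2⌉₊ :=
        mul_le_mul (two_mul_sqrt_le_coverRatio_sq_sub_one hε) (Nat.le_ceil _) (by positivity)
          (sub_nonneg.2 (one_le_pow₀ (one_le_coverRatio hε)))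
  have hγ : 0 ≤ gamEps ε := zero_le_one.trans (one_le_gamEps hε)
  exact ((hL.mono_left hN).lt_gamEps_pow_mul hε hκN).trans_le (by gcongr)

end IsSqrtCover

theorem one_le_sqrt_mul_rpow_half {x δ ε : ℝ} (hx : 0 < x) (hε : x ^ (-δ) ≤ ε) :
    1 ≤ √ε * x ^ (δ / 2) :=
  calc (1 : ℝ) = √(x ^ (-δ)) * x ^ (δ / 2) := by
        rw [Real.sqrt_eq_rpow, ← Real.rpow_mul hx.le, ← Real.rpow_add hx]
        ring_nf
        exact (Real.rpow_zero x).symm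
    _ ≤ √ε * x ^ (δ / 2) := by gcongr

/-- **Lower bound for approximating the square root splitting function (Theorem 4.2).**
For every `δ ∈ (0,2)` there is a constant `c > 0` depending only on `δ` such that for all
integers `r ≥ 2` and all `ε > 0` with `ε ≥ r^{-δ}`: if `L` is a finite set of affine
functions each upper bounding `i ↦ √i` at all integers `i ∈ {0,…,r}`, and every integer
`i ∈ {1,…,r}` has some `g ∈ L` with `g(i) ≤ (1+ε)·√i`, then
`|L| ≥ c·(log r)/(log γ(ε))`. -/
theorem sqrt_cover_lower_bound :
    ∀ δ : ℝ, 0 < δ → δ < 2 →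
    ∃ c : ℝ, 0 < c ∧
      ∀ r : ℕ, 2 ≤ r → ∀ ε : ℝ, 0 < ε → (r : ℝ) ^ (-δ) ≤ ε →
      ∀ L : Finset (ℝ × ℝ),
        (∀ g ∈ L, ∀ i : ℕ, i ≤ r → Real.sqrt (i : ℝ) ≤ g.1 * (i : ℝ) + g.2) →
        (∀ i : ℕ, 1 ≤ i → i ≤ r →
          ∃ g ∈ L, g.1 * (i : ℝ) + g.2 ≤ (1 + ε) * Real.sqrt (i : ℝ)) →
        c * (Real.log (r : ℝ) / Real.log (gamEps ε)) ≤ (L.card : ℝ) := by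
  intro δ hδ hδ2
  refine ⟨(1 - δ / 2) / 2, by linarith, fun r hr ε hε hrε L hupper hcover => ?_⟩
  have hr1 : (1 : ℝ) ≤ r := mod_cast one_le_two.trans hr
  have hr0 : (0 : ℝ) < r := zero_lt_one.trans_le hr1
  have hγ : 0 < gamEps ε := zero_lt_one.trans (one_lt_gamEps hε)
  have hL : IsSqrtCover ε L 1 r :=
    ⟨fun g hg i hi => hupper g hg i hi.2, fun i hi => hcover i hi.1 hi.2⟩
  have hlt : (r : ℝ) < gamEps ε ^ (2 * L.card) * (r : ℝ) ^ (δ / 2) :=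
    hL.lt_gamEps_pow_mul_of_one_le_sqrt_mul (Real.one_le_rpow hr1 (by positivity))
      (one_le_sqrt_mul_rpow_half hr0 hrε)
  have hlog : Real.log r < 2 * L.card * Real.log (gamEps ε) + δ / 2 * Real.log r := by
    have := Real.log_lt_log hr0 hlt
    rwa [Real.log_mul (by positivity) (by positivity), Real.log_pow, Real.log_rpow hr0,
      Nat.cast_mul, Nat.cast_ofNat] at this
  rw [← mul_div_assoc, div_le_iff₀ (Real.log_pos (one_lt_gamEps hε))]
  linarith
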